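/- Suppose (A_i)_{i∈I} are unital subalgebras of A that are free with respect to φ. Consider the compressed algebra pBp with unit p, equipped with the linear functionals ψ := φ restricted to pBp and ψ′ := (φ + φ′) restricted to pBp (one has ψ(p) = 1 and ψ′(p) = 0), and for each i ∈ I let D_i be the subalgebra of pBp generated by {p a p : a ∈ A_i} (note p ∈ D_i). Then the subalgebras (D_i)_{i∈I} are infinitesimally free with respect to (ψ, ψ′): for every n ≥ 1, every (i₁, …, iₙ) with i₁ ≠ i₂, …, i_{n−1} ≠ iₙ, and all bₖ ∈ D_{iₖ} with ψ(bₖ) = 0, one has ψ(b₁ ⋯ bₙ) = 0, and ψ′(b₁ ⋯ bₙ) = ψ(b₁ bₙ) ψ(b₂ b_{n−1}) ⋯ ψ(b_{(n−1)/2} b_{(n+3)/2}) ψ′(b_{(n+1)/2}) if n is odd and i₁ = iₙ, …, i_{(n−1)/2} = i_{(n+3)/2}, while ψ′(b₁ ⋯ bₙ) = 0 otherwise. -/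

import Mathlib

open scoped BigOperators

namespace TypeBPrime

variable {B : Type*} [Ring B] [Algebra ℂ B]

/-- The alternating word `a 0 * (f 0 * a 1) * ⋯ * (f (n-1) * a n)`. -/
def altWord {n : ℕ} (a : Fin (n + 1) → B) (f : Fin n → B) : B :=
  a 0 * (List.ofFn fun k : Fin n => f k * a k.succ).prod

/-- Cyclic-antimonotone independence of the pair `(A₁, F₁)` with respect to `(φ, Φ)`:
`Φ(a₀ f₁ a₁ ⋯ fₙ aₙ) = φ(a₀ aₙ) · φ(a₁) ⋯ φ(a_{n-1}) · Φ(f₁ ⋯ fₙ)` for all `n ≥ 1`. -/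
def CyclicAntimonotone (φ Φ : B → ℂ) (A₁ F₁ : Set B) : Prop :=
  ∀ n : ℕ, 0 < n → ∀ (a : Fin (n + 1) → B) (f : Fin n → B),
    (∀ k, a k ∈ A₁) → (∀ k, f k ∈ F₁) →
    Φ (altWord a f) =
      φ (a 0 * a (Fin.last n)) *
        (∏ k ∈ Finset.Ioo (0 : Fin (n + 1)) (Fin.last n), φ (a k)) *
        Φ (List.ofFn f).prod

/-- Freeness of a family of subsets with respect to `φ`:
alternating words in centered elements are centered. -/
def IsFreeFamily {ι : Type*} (φ : B → ℂ) (Alg : ι → Set B) : Prop :=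
  ∀ (n : ℕ) (idx : Fin (n + 1) → ι) (a : Fin (n + 1) → B),
    (∀ k : Fin n, idx k.castSucc ≠ idx k.succ) →
    (∀ k, a k ∈ Alg (idx k)) → (∀ k, φ (a k) = 0) →
    φ (List.ofFn a).prod = 0

/-- Infinitesimal freeness of a family of subsets with respect to `(φ, φ')`. -/
def IsInfFree {ι : Type*} (φ φ' : B → ℂ) (Alg : ι → Set B) : Prop :=
  IsFreeFamily φ Alg ∧
  (∀ (n : ℕ) (idx : Fin (n + 1) → ι) (b : Fin (n + 1) → B),
    (∀ k : Fin n, idx k.castSucc ≠ idx k.succ) →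
    (∀ k, b k ∈ Alg (idx k)) → (∀ k, φ (b k) = 0) →
    ¬(Even n ∧ ∀ k, idx k = idx k.rev) →
    φ' (List.ofFn b).prod = 0) ∧
  (∀ (m : ℕ) (idx : Fin (2 * m + 1) → ι) (b : Fin (2 * m + 1) → B),
    (∀ k : Fin (2 * m), idx k.castSucc ≠ idx k.succ) →
    (∀ k, b k ∈ Alg (idx k)) → (∀ k, φ (b k) = 0) →
    (∀ k, idx k = idx k.rev) →
    φ' (List.ofFn b).prod =
      (∏ j : Fin m,
          φ (b (Fin.castLE (by omega) j) * b (Fin.castLE (by omega) j).rev)) *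
        φ' (b ⟨m, by omega⟩))

/-- Trivial independence with respect to `Φ`: alternating words of length `≥ 2` vanish. -/
def TrivIndep {ι : Type*} (Φ : B → ℂ) (Fj : ι → Set B) : Prop :=
  ∀ (n : ℕ) (idx : Fin (n + 2) → ι) (f : Fin (n + 2) → B),
    (∀ k : Fin (n + 1), idx k.castSucc ≠ idx k.succ) →
    (∀ k, f k ∈ Fj (idx k)) →
    Φ (List.ofFn f).prod = 0

/-- Boolean independence with respect to `ψ`. -/
def BoolIndep {ι : Type*} (ψ : B → ℂ) (C : ι → Set B) : Prop :=
  ∀ (n : ℕ) (idx : Fin (n + 1) → ι) (c : Fin (n + 1) → B),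
    (∀ k : Fin n, idx k.castSucc ≠ idx k.succ) →
    (∀ k, c k ∈ C (idx k)) →
    ψ (List.ofFn c).prod = ∏ k, ψ (c k)

/-- Conditional freeness with respect to `(φ, ψ)`. -/
def CFree {ι : Type*} (φ ψ : B → ℂ) (Alg : ι → Set B) : Prop :=
  IsFreeFamily φ Alg ∧
  ∀ (n : ℕ) (idx : Fin (n + 1) → ι) (b : Fin (n + 1) → B),
    (∀ k : Fin n, idx k.castSucc ≠ idx k.succ) →
    (∀ k, b k ∈ Alg (idx k)) → (∀ k, φ (b k) = 0) →
    ψ (List.ofFn b).prod = ∏ k, ψ (b k)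

/-- The unital subspace `ℂ·1_B + F₁`. -/
def unitize (F₁ : Set B) : Set B :=
  {x | ∃ c : ℂ, ∃ f ∈ F₁, x = algebraMap ℂ B c + f}

/-- The set of alternating words `a₀ f₁ a₁ ⋯ fₙ aₙ` with letters from `A₁` and `F₁`. -/
def wordSet (A₁ F₁ : Set B) : Set B :=
  {x | ∃ n : ℕ, 0 < n ∧ ∃ (a : Fin (n + 1) → B) (f : Fin n → B),
    (∀ k, a k ∈ A₁) ∧ (∀ k, f k ∈ F₁) ∧ x = altWord a f}

/-- `A₁⟨F₁⟩₀`: the linear span of all alternating words `a₀ f₁ a₁ ⋯ fₙ aₙ`. -/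
def wordSpan (A₁ F₁ : Set B) : Set B :=
  (Submodule.span ℂ (wordSet A₁ F₁) : Submodule ℂ B)

/-- The type B′ subalgebra `A₁⟨F₁⟩ = A₁ + A₁⟨F₁⟩₀`. -/
def typeBSub (A₁ F₁ : Set B) : Set B :=
  {x | ∃ a ∈ A₁, ∃ f ∈ wordSpan A₁ F₁, x = a + f}

/-- `(tₙ)` is the inverse Markov–Krein transform of the sequence `(mₙ)`:
`(n+1)·mₙ = Σ_{j=0}^{n} tⱼ m_{n−j}` for all `n ≥ 0`. -/
def IsInvMK (m t : ℕ → ℂ) : Prop :=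
  ∀ n : ℕ, ((n : ℂ) + 1) * m n = ∑ j ∈ Finset.range (n + 1), t j * m (n - j)

/-!
Infinitesimal freeness says that on alternating words of `φ`-centered letters `φ` vanishes and `φ'`
obeys a Leibniz rule: freeness makes `φ` fold what is left of a word after removing one letter, and
only the middle letter of a word with palindromic indices survives.

For `φ'` the idempotent `q` acts as the rank one projection onto the vacuum vector of `φ`, i.e.
`q a q = φ(a) q` for `a ∈ A`, up to an ideal that neither functional detects. Put `p = 1 - q`.
Modulo this ideal a centered element `b` of the algebra generated by the `p a p`, `a ∈ Aᵢ`, equals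
`a - q a - a q + ∑ cⱼ q dⱼ` with `a`, `cⱼ`, `dⱼ` in `Aᵢ` and centered. Replace the letters `b` of a
word by their cores `a` one after the other. The resulting word lies in `A`, where `φ'` is zero, and
`φ` does not notice the replacements at all. In the error term of one replacement, the letters to
its right may be replaced as well, since `q x q` is negligible for every nonempty centered word `x`.
The parts `- q a - a q` then contribute `0`, and `∑ cⱼ q dⱼ` contributes `∑ φ(cⱼ dⱼ) = φ'(b)` times
`φ` of the other letters: this is the Leibniz rule.
-/

section Words

variable {ι M R : Type*} [Monoid M]

/-- The product of the letters of a word `w`, each letter `(i, b)` being an element `b` tagged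
with the index `i` of the algebra it is taken from. -/
def wordProd (w : List (ι × M)) : M := (w.map Prod.snd).prod

@[simp]
lemma wordProd_nil : wordProd ([] : List (ι × M)) = 1 := rfl

@[simp]
lemma wordProd_cons (x : ι × M) (w : List (ι × M)) : wordProd (x :: w) = x.2 * wordProd w := by
  simp [wordProd]

@[simp]
lemma wordProd_append (v w : List (ι × M)) : wordProd (v ++ w) = wordProd v * wordProd w := by
  simp [wordProd]

lemma wordProd_mem {S : Type*} [SetLike S M] [SubmonoidClass S M] {C : S} {w : List (ι × M)}
    (h : ∀ x ∈ w, x.2 ∈ C) : wordProd w ∈ C := by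
  refine list_prod_mem fun y hy => ?_
  obtain ⟨x, hx, rfl⟩ := List.mem_map.1 hy
  exact h x hx

lemma wordProd_ofFn {n : ℕ} (idx : Fin n → ι) (b : Fin n → M) :
    wordProd (List.ofFn fun k => (idx k, b k)) = (List.ofFn b).prod := by
  rw [wordProd, List.map_ofFn]
  rfl

/-- Alternating words of `φ`-centered letters, the words that enter the definition of freeness. -/
structure IsCenteredWord (φ : R → ℂ) (D : ι → Set R) (w : List (ι × R)) : Prop where
  isChain : (w.map Prod.fst).IsChain (· ≠ ·)
  mem : ∀ x ∈ w, x.2 ∈ D x.1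
  map_eq_zero : ∀ x ∈ w, φ x.2 = 0

variable {φ : R → ℂ} {D : ι → Set R} {U V w : List (ι × R)} {i : ι} {y z : R}

lemma IsCenteredWord.of_infix (hw : IsCenteredWord φ D w) (h : V <:+: w) :
    IsCenteredWord φ D V where
  isChain := hw.isChain.infix (h.map Prod.fst)
  mem x hx := hw.mem x (h.subset hx)
  map_eq_zero x hx := hw.map_eq_zero x (h.subset hx)

lemma IsCenteredWord.replace (hw : IsCenteredWord φ D (U ++ (i, y) :: V)) (hz : z ∈ D i)
    (hφz : φ z = 0) : IsCenteredWord φ D (U ++ (i, z) :: V) := by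
  obtain ⟨hchain, hmem, hzero⟩ := hw
  simp only [List.mem_append, List.mem_cons, or_imp, forall_and, forall_eq] at hmem hzero
  refine ⟨by simpa using hchain, ?_, ?_⟩ <;>
    simp only [List.mem_append, List.mem_cons, or_imp, forall_and, forall_eq]
  exacts [⟨hmem.1, hz, hmem.2.2⟩, ⟨hzero.1, hφz, hzero.2.2⟩]

lemma isCenteredWord_ofFn {n : ℕ} {idx : Fin (n + 1) → ι} {b : Fin (n + 1) → R}
    (hidx : ∀ k : Fin n, idx k.castSucc ≠ idx k.succ) (hmem : ∀ k, b k ∈ D (idx k))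
    (hzero : ∀ k, φ (b k) = 0) : IsCenteredWord φ D (List.ofFn fun k => (idx k, b k)) where
  isChain := by
    rw [List.map_ofFn, List.isChain_iff_getElem]
    intro k hk
    simp only [List.getElem_ofFn]
    exact hidx ⟨k, by simpa using hk⟩
  mem := by simpa [List.mem_ofFn, -List.ofFn_succ] using hmem
  map_eq_zero := by simpa [List.mem_ofFn, -List.ofFn_succ] using hzero

end Words

lemma IsFreeFamily.apply_wordProd {ι R : Type*} [Ring R] {φ : R → ℂ} {D : ι → Set R}
    (hfree : IsFreeFamily φ D) {w : List (ι × R)} (hw : IsCenteredWord φ D w) (hne : w ≠ []) :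
    φ (wordProd w) = 0 := by
  obtain ⟨n, hn⟩ := Nat.exists_eq_succ_of_ne_zero (mt List.length_eq_zero_iff.1 hne)
  obtain ⟨hchain, hmem, hzero⟩ := hw
  rw [List.isChain_iff_getElem] at hchain
  simp only [List.getElem_map, List.length_map] at hchain
  have hprod : wordProd w = (List.ofFn fun k : Fin (n + 1) => w[k].2).prod := by
    rw [wordProd]
    congr 1
    exact List.ext_getElem (by simp [hn]) (by simp [-List.ofFn_succ])
  rw [hprod]
  exact hfree n (fun k => w[k].1) _ (fun k => hchain k (by omega))
    (fun k => hmem _ (List.getElem_mem _)) fun k => hzero _ (List.getElem_mem _)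

section Folding

variable {ι : Type*} {φ : B →ₗ[ℂ] ℂ} {D : ι → NonUnitalSubalgebra ℂ B} {e : B}
  {U V : List (ι × B)}

lemma IsFreeFamily.apply_insert (hfree : IsFreeFamily φ fun i => (D i : Set B)) (hφ1 : φ 1 = 1)
    (he : ∀ i, e ∈ D i) (hφe : ∀ x y, φ (x * e * y) = φ (x * y)) {i : ι} {x y : B}
    (hw : IsCenteredWord φ (fun i => (D i : Set B)) (U ++ (i, y) :: V)) (hx : x ∈ D i) :
    φ (wordProd U * x * wordProd V) = φ x * φ (wordProd U * wordProd V) := by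
  have hφe1 : φ e = 1 := by simpa [hφ1] using hφe 1 1
  have hcentered : φ (wordProd U * (x - φ x • e) * wordProd V) = 0 := by
    have hw' := hw.replace (z := x - φ x • e) (sub_mem hx (SMulMemClass.smul_mem _ (he i)))
      (by simp [hφe1])
    simpa [mul_assoc] using hfree.apply_wordProd hw' (by simp)
  rw [mul_sub, sub_mul, map_sub, mul_smul_comm, smul_mul_assoc, map_smul, hφe,
    smul_eq_mul] at hcentered
  exact sub_eq_zero.1 hcentered

lemma IsFreeFamily.apply_concat_mul_cons (hfree : IsFreeFamily φ fun i => (D i : Set B))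
    (hφ1 : φ 1 = 1) (he : ∀ i, e ∈ D i) (hφe : ∀ x y, φ (x * e * y) = φ (x * y)) {i : ι} {x y : B}
    (hU : IsCenteredWord φ (fun i => (D i : Set B)) (U ++ [(i, x)]))
    (hV : IsCenteredWord φ (fun i => (D i : Set B)) ((i, y) :: V)) :
    φ (wordProd (U ++ [(i, x)]) * wordProd ((i, y) :: V)) =
      φ (x * y) * φ (wordProd U * wordProd V) := by
  have hw : IsCenteredWord φ (fun i => (D i : Set B)) (U ++ (i, x) :: V) := by
    refine ⟨?_, ?_, ?_⟩
    · simpa using List.IsChain.append_overlap (l₂ := [i]) (by simpa using hU.isChain)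
        (by simpa using hV.isChain) (by simp)
    · intro z hz
      rcases List.mem_append.1 (List.append_cons U _ V ▸ hz) with hz | hz
      exacts [hU.mem z hz, hV.mem z (by simp [hz])]
    · intro z hz
      rcases List.mem_append.1 (List.append_cons U _ V ▸ hz) with hz | hz
      exacts [hU.map_eq_zero z hz, hV.map_eq_zero z (by simp [hz])]
  have hxy : x * y ∈ D i := mul_mem (hU.mem (i, x) (by simp)) (hV.mem (i, y) (by simp))
  simpa [mul_assoc] using hfree.apply_insert hφ1 he hφe hw hxy

lemma IsFreeFamily.apply_mul_of_colors_ne (hfree : IsFreeFamily φ fun i => (D i : Set B))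
    (hφ1 : φ 1 = 1) (he : ∀ i, e ∈ D i) (hφe : ∀ x y, φ (x * e * y) = φ (x * y))
    (hU : IsCenteredWord φ (fun i => (D i : Set B)) U)
    (hV : IsCenteredWord φ (fun i => (D i : Set B)) V)
    (hne : (U.map Prod.fst).reverse ≠ V.map Prod.fst) :
    φ (wordProd U * wordProd V) = 0 := by
  induction U using List.reverseRecOn generalizing V with
  | nil =>
    rw [wordProd_nil, one_mul]
    exact hfree.apply_wordProd hV (by rintro rfl; simp at hne)
  | append_singleton U u ih =>
    rcases V with _ | ⟨v, V⟩
    · simpa using hfree.apply_wordProd hU (by simp)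
    obtain ⟨i, x⟩ := u
    obtain ⟨j, y⟩ := v
    by_cases hij : i = j
    · subst hij
      rw [hfree.apply_concat_mul_cons hφ1 he hφe hU hV,
        ih (hU.of_infix (List.prefix_append _ _).isInfix)
          (hV.of_infix (List.suffix_cons _ _).isInfix) (by simpa using hne), mul_zero]
    · rw [← wordProd_append]
      refine hfree.apply_wordProd ⟨?_, ?_, ?_⟩ (by simp)
      · rw [List.map_append]
        exact hU.isChain.append hV.isChain (by simpa using hij)
      · exact fun z hz => (List.mem_append.1 hz).elim (hU.mem z) (hV.mem z)
      · exact fun z hz => (List.mem_append.1 hz).elim (hU.map_eq_zero z) (hV.map_eq_zero z)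

lemma IsFreeFamily.apply_mul_of_colors_eq (hfree : IsFreeFamily φ fun i => (D i : Set B))
    (hφ1 : φ 1 = 1) (he : ∀ i, e ∈ D i) (hφe : ∀ x y, φ (x * e * y) = φ (x * y))
    (hU : IsCenteredWord φ (fun i => (D i : Set B)) U)
    (hV : IsCenteredWord φ (fun i => (D i : Set B)) V)
    (heq : (U.map Prod.fst).reverse = V.map Prod.fst) :
    φ (wordProd U * wordProd V) =
      (List.zipWith (fun u v => φ (u.2 * v.2)) U V.reverse).prod := by
  induction U using List.reverseRecOn generalizing V with
  | nil =>
    obtain rfl : V = [] := by simpa using heq.symm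
    simp [hφ1]
  | append_singleton U u ih =>
    rcases V with _ | ⟨v, V⟩
    · simp at heq
    obtain ⟨i, x⟩ := u
    obtain ⟨j, y⟩ := v
    obtain ⟨rfl, hcolors⟩ : i = j ∧ (U.map Prod.fst).reverse = V.map Prod.fst := by
      simpa [eq_comm] using heq
    have hlen : U.length = V.reverse.length := by simpa using congrArg List.length hcolors
    rw [hfree.apply_concat_mul_cons hφ1 he hφe hU hV,
      ih (hU.of_infix (List.prefix_append _ _).isInfix)
        (hV.of_infix (List.suffix_cons _ _).isInfix) hcolors,
      List.reverse_cons, List.zipWith_append hlen, List.prod_append, mul_comm]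
    simp

end Folding

section Leibniz

lemma reverse_take_eq_drop_iff {α : Type*} {l : List α} {k : ℕ} (hk : k < l.length) :
    (l.take k).reverse = l.drop (k + 1) ↔ l.reverse = l ∧ l.length = 2 * k + 1 := by
  constructor
  · intro h
    have hlen : l.length = 2 * k + 1 := by
      have := congrArg List.length h
      simp only [List.length_reverse, List.length_take, List.length_drop] at this
      omega
    refine ⟨?_, hlen⟩
    have hsplit : l = l.take k ++ l[k] :: (l.take k).reverse := by
      rw [h, List.getElem_cons_drop, List.take_append_drop]
    rw [hsplit, List.reverse_append, List.reverse_cons, List.reverse_reverse, List.append_assoc]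
    rfl
  · rintro ⟨hrev, hlen⟩
    conv_rhs => rw [← hrev, List.drop_reverse]
    congr 2
    omega

lemma reverse_ofFn_eq_self_iff {α : Type*} {n : ℕ} {f : Fin n → α} :
    (List.ofFn f).reverse = List.ofFn f ↔ ∀ k, f k = f k.rev := by
  have hrev : (List.ofFn f).reverse = List.ofFn fun k => f k.rev :=
    List.ext_getElem (by simp) fun k _ _ => by
      simp only [List.getElem_reverse, List.getElem_ofFn, List.length_ofFn]
      congr 1
      ext
      simp only [Fin.val_rev]
      omega
  rw [hrev, List.ofFn_inj, funext_iff]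
  exact forall_congr' fun k => eq_comm

variable {ι : Type*}

/-- The Leibniz rule for `φ'` on centered alternating words: `φ'` acts on one letter at a time,
while `φ` is applied to the product of the remaining ones. -/
def LeibnizRule {R : Type*} [Monoid R] (φ φ' : R → ℂ) (D : ι → Set R) : Prop :=
  ∀ w : List (ι × R), IsCenteredWord φ D w →
    φ' (wordProd w) =
      ∑ k : Fin w.length, φ' w[k].2 * φ (wordProd (w.take k) * wordProd (w.drop (k + 1)))

variable {φ : B →ₗ[ℂ] ℂ} {φ' : B → ℂ} {D : ι → NonUnitalSubalgebra ℂ B} {e : B}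
  {w : List (ι × B)}

lemma IsFreeFamily.apply_take_mul_drop_eq_zero
    (hfree : IsFreeFamily φ fun i => (D i : Set B)) (hφ1 : φ 1 = 1)
    (he : ∀ i, e ∈ D i) (hφe : ∀ x y, φ (x * e * y) = φ (x * y))
    (hw : IsCenteredWord φ (fun i => (D i : Set B)) w) {k : ℕ} (hk : k < w.length)
    (hpal : ¬((w.map Prod.fst).reverse = w.map Prod.fst ∧ w.length = 2 * k + 1)) :
    φ (wordProd (w.take k) * wordProd (w.drop (k + 1))) = 0 := by
  refine hfree.apply_mul_of_colors_ne hφ1 he hφe (hw.of_infix (List.take_prefix _ _).isInfix)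
    (hw.of_infix (List.drop_suffix _ _).isInfix) ?_
  rwa [List.map_take, List.map_drop, Ne, reverse_take_eq_drop_iff (by simpa using hk),
    List.length_map]

lemma LeibnizRule.apply_eq_zero (hleib : LeibnizRule φ φ' fun i => (D i : Set B))
    (hfree : IsFreeFamily φ fun i => (D i : Set B)) (hφ1 : φ 1 = 1)
    (he : ∀ i, e ∈ D i) (hφe : ∀ x y, φ (x * e * y) = φ (x * y))
    (hw : IsCenteredWord φ (fun i => (D i : Set B)) w)
    (hpal : ¬(Odd w.length ∧ (w.map Prod.fst).reverse = w.map Prod.fst)) :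
    φ' (wordProd w) = 0 := by
  rw [hleib w hw]
  refine Finset.sum_eq_zero fun k _ => ?_
  rw [hfree.apply_take_mul_drop_eq_zero hφ1 he hφe hw k.2, mul_zero]
  exact fun h => hpal ⟨⟨k, h.2⟩, h.1⟩

lemma LeibnizRule.apply_eq_mul (hleib : LeibnizRule φ φ' fun i => (D i : Set B))
    (hfree : IsFreeFamily φ fun i => (D i : Set B)) (hφ1 : φ 1 = 1)
    (he : ∀ i, e ∈ D i) (hφe : ∀ x y, φ (x * e * y) = φ (x * y))
    (hw : IsCenteredWord φ (fun i => (D i : Set B)) w) {m : ℕ} (hlen : w.length = 2 * m + 1)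
    (hpal : (w.map Prod.fst).reverse = w.map Prod.fst) :
    φ' (wordProd w) =
      (List.zipWith (fun u v => φ (u.2 * v.2)) (w.take m) (w.drop (m + 1)).reverse).prod *
        φ' (w[m]'(by omega)).2 := by
  have hm : m < w.length := by omega
  rw [hleib w hw, Finset.sum_eq_single (⟨m, hm⟩ : Fin w.length)]
  · rw [hfree.apply_mul_of_colors_eq hφ1 he hφe (hw.of_infix (List.take_prefix _ _).isInfix)
      (hw.of_infix (List.drop_suffix _ _).isInfix), mul_comm]
    · rfl
    · rw [List.map_take, List.map_drop, reverse_take_eq_drop_iff (by simpa using hm)]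
      exact ⟨hpal, by simpa using hlen⟩
  · intro k _ hk
    rw [hfree.apply_take_mul_drop_eq_zero hφ1 he hφe hw k.2, mul_zero]
    rintro ⟨-, hlen'⟩
    exact hk (Fin.ext (by simp only; omega))
  · simp

theorem LeibnizRule.isInfFree (hleib : LeibnizRule φ φ' fun i => (D i : Set B))
    (hfree : IsFreeFamily φ fun i => (D i : Set B)) (hφ1 : φ 1 = 1)
    (he : ∀ i, e ∈ D i) (hφe : ∀ x y, φ (x * e * y) = φ (x * y)) :
    IsInfFree φ φ' fun i => (D i : Set B) := by
  refine ⟨hfree, ?_, ?_⟩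
  · intro n idx b hidx hmem hzero hpal
    have hw := isCenteredWord_ofFn (D := fun i => (D i : Set B)) hidx hmem hzero
    rw [← wordProd_ofFn idx]
    refine hleib.apply_eq_zero hfree hφ1 he hφe hw ?_
    rw [List.map_ofFn, List.length_ofFn, Nat.odd_add_one, Nat.not_odd_iff_even]
    exact fun h => hpal ⟨h.1, reverse_ofFn_eq_self_iff.1 h.2⟩
  · intro m idx b hidx hmem hzero hpal
    have hw := isCenteredWord_ofFn (D := fun i => (D i : Set B)) hidx hmem hzero
    rw [← wordProd_ofFn idx, hleib.apply_eq_mul hfree hφ1 he hφe hw List.length_ofFn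
      (by rw [List.map_ofFn]; exact reverse_ofFn_eq_self_iff.2 hpal), List.getElem_ofFn,
      ← List.prod_ofFn]
    congr 2
    refine List.ext_getElem (by simp [-List.ofFn_succ]; omega) fun k _ hk => ?_
    simp only [List.getElem_zipWith, List.getElem_take, List.getElem_reverse, List.getElem_drop,
      List.getElem_ofFn, List.length_drop, List.length_ofFn]
    have hk : k < m := by simpa using hk
    congr 3
    ext
    simp only [Fin.val_rev, Fin.val_castLE]
    omega

end Leibniz

section CyclicAntimonotone

lemma prod_Ioo_zero_last {M : Type*} [CommMonoid M] {n : ℕ} (g : Fin (n + 2) → M) :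
    ∏ k ∈ Finset.Ioo 0 (Fin.last (n + 1)), g k = ∏ k : Fin n, g k.castSucc.succ := by
  have hIoo : Finset.Ioo (0 : Fin (n + 2)) (Fin.last (n + 1)) =
      Finset.univ.map (Fin.castSuccEmb.trans (Fin.succEmb (n + 1))) := by
    rw [← Finset.map_map, ← Fin.Iio_last_eq_map, Fin.map_succEmb_Iio, Fin.succ_last]
  rw [hIoo, Finset.prod_map]
  rfl

lemma CyclicAntimonotone.apply_list {R : Type*} [Ring R] {φ Φ : R → ℂ} {A₁ F₁ : Set R} {q x z : R}
    {l : List R} (h : CyclicAntimonotone φ Φ A₁ F₁) (hqF : q ∈ F₁) (hq : IsIdempotentElem q)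
    (hx : x ∈ A₁) (hl : ∀ y ∈ l, y ∈ A₁) (hz : z ∈ A₁) :
    Φ (x * ((l.map (q * ·)).prod * (q * z))) = φ (x * z) * (l.map φ).prod * Φ q := by
  let a : Fin (l.length + 2) → R := Fin.cons x (Fin.snoc l.get z)
  have ha : ∀ k, a k ∈ A₁ := by
    refine Fin.cases hx (Fin.lastCases ?_ fun j => ?_)
    · simpa [a] using hz
    · simp [a, hl]
  have hword : altWord a (fun _ => q) = x * ((l.map (q * ·)).prod * (q * z)) := by
    have hmap : (List.ofFn fun k => q * l.get k) = l.map (q * ·) :=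
      List.ext_getElem (by simp) (by simp [-List.ofFn_succ])
    rw [altWord, List.ofFn_succ', List.prod_concat, ← hmap]
    simp [a, -List.ofFn_succ]
  have hprod : ∏ k ∈ Finset.Ioo 0 (Fin.last (l.length + 1)), φ (a k) = (l.map φ).prod := by
    rw [prod_Ioo_zero_last, ← List.prod_ofFn]
    simp [a, -List.ofFn_succ]
  have hlast : a (Fin.last (l.length + 1)) = z := by
    simp [a, ← Fin.succ_last]
  rw [← hword, h _ (Nat.succ_pos _) a _ ha fun _ => hqF, hprod, hlast, List.ofFn_const,
    List.prod_replicate, hq.pow_succ_eq]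
  rfl

variable {M : Type*} [Monoid M] {S : Submonoid M} {q s : M}

lemma exists_list_mul_eq_of_mem_closure (hs : s ∈ Submonoid.closure (S ∪ {q})) :
    ∃ x ∈ S, ∃ l : List M, (∀ y ∈ l, y ∈ S) ∧ s * q = x * ((l.map (q * ·)).prod * q) := by
  induction hs using Submonoid.closure_induction_left with
  | one => exact ⟨1, S.one_mem, [], by simp, by simp⟩
  | mul_left y hy s _ ih =>
    obtain ⟨x, hx, l, hl, hsq⟩ := ih
    rcases hy with hy | rfl
    · exact ⟨y * x, S.mul_mem hy hx, l, hl, by simp only [mul_assoc, hsq]⟩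
    · exact ⟨1, S.one_mem, x :: l, by simpa using ⟨hx, hl⟩, by simp [mul_assoc, hsq]⟩

lemma exists_list_eq_mul_of_mem_closure (hs : s ∈ Submonoid.closure (S ∪ {q})) :
    ∃ z ∈ S, ∃ l : List M, (∀ y ∈ l, y ∈ S) ∧ q * s = (l.map (q * ·)).prod * (q * z) := by
  induction hs using Submonoid.closure_induction_right with
  | one => exact ⟨1, S.one_mem, [], by simp, by simp⟩
  | mul_right s _ y hy ih =>
    obtain ⟨z, hz, l, hl, hqs⟩ := ih
    rcases hy with hy | rfl
    · exact ⟨z * y, S.mul_mem hz hy, l, hl, by simp only [← mul_assoc, hqs]⟩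
    · refine ⟨1, S.one_mem, l ++ [z], ?_, by simp [← mul_assoc, hqs]⟩
      simpa [or_imp, forall_and] using ⟨hl, hz⟩

end CyclicAntimonotone

section VacuumProjection

/-- The algebra generated by `A` and the projection `q`, in which all computations take place. -/
def vacuumAlgebra (A : Subalgebra ℂ B) (q : B) : Subalgebra ℂ B :=
  Algebra.adjoin ℂ (A ∪ {q})

/-- The properties of `q` that drive the computation of `(φ, φ')` on the compression by `1 - q`:
for `φ'` the idempotent `q` looks like the rank one projection onto the vacuum vector of the state
`φ` on `A`, and `φ` itself is blind to `q`. -/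
structure IsVacuumProjection (φ φ' : B →ₗ[ℂ] ℂ) (A : Subalgebra ℂ B) (q : B) : Prop where
  isIdempotentElem : IsIdempotentElem q
  map_one : φ 1 = 1
  map_mul_mul : ∀ u v, φ (u * q * v) = 0
  map'_eq_zero : ∀ a ∈ A, φ' a = 0
  map'_mul_mul : ∀ c ∈ A, ∀ d ∈ A, φ' (c * q * d) = φ (c * d)
  map'_sandwich : ∀ u ∈ vacuumAlgebra A q, ∀ a ∈ A, ∀ v ∈ vacuumAlgebra A q,
    φ' (u * (q * a * q) * v) = φ a * φ' (u * q * v)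

variable {φ Φ φ' : B →ₗ[ℂ] ℂ} {A : Subalgebra ℂ B} {F₁ : Set B} {q a u v : B}

lemma CyclicAntimonotone.apply_sandwich (h : CyclicAntimonotone φ Φ A F₁) (hqF : q ∈ F₁)
    (hq : IsIdempotentElem q) (ha : a ∈ A) (hu : u ∈ vacuumAlgebra A q)
    (hv : v ∈ vacuumAlgebra A q) : Φ (u * (q * a * q) * v) = φ a * Φ (u * q * v) := by
  rw [vacuumAlgebra, ← Subalgebra.mem_toSubmodule, Algebra.adjoin_eq_span] at hu hv
  induction hu, hv using Submodule.span_induction₂ with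
  | mem_mem u v hu hv =>
    obtain ⟨x, hx, l, hl, huq⟩ := exists_list_mul_eq_of_mem_closure (S := A.toSubmonoid) hu
    obtain ⟨z, hz, m, hm, hqv⟩ := exists_list_eq_mul_of_mem_closure (S := A.toSubmonoid) hv
    have hlong : u * (q * a * q) * v =
        x * (((l ++ a :: m).map (q * ·)).prod * (q * z)) := by
      calc u * (q * a * q) * v = u * q * a * (q * v) := by simp only [mul_assoc]
        _ = _ := by simp [huq, hqv, mul_assoc]
    have hshort : u * q * v = x * (((l ++ m).map (q * ·)).prod * (q * z)) := by
      calc u * q * v = u * q * (q * v) := by rw [mul_assoc, mul_assoc, ← mul_assoc q q v, hq.eq]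
        _ = x * ((l.map (q * ·)).prod * (q * (q * v))) := by simp only [huq, mul_assoc]
        _ = _ := by rw [← mul_assoc q, hq.eq, hqv]; simp [mul_assoc]
    rw [hlong, hshort, h.apply_list hqF hq hx _ hz, h.apply_list hqF hq hx _ hz]
    · simp only [List.map_append, List.map_cons, List.prod_append, List.prod_cons]
      ring
    · simpa [or_imp, forall_and] using ⟨hl, hm⟩
    · simpa [or_imp, forall_and] using ⟨hl, ha, hm⟩
  | zero_left => simp
  | zero_right => simp
  | add_left x y z _ _ _ hx hy => simp only [add_mul, map_add, hx, hy, mul_add]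
  | add_right x y z _ _ _ hx hy => simp only [mul_add, map_add, hx, hy]
  | smul_left r x y _ _ hxy =>
    simp only [smul_mul_assoc, map_smul, hxy, smul_eq_mul, mul_left_comm]
  | smul_right r x y _ _ hxy => simp only [mul_smul_comm, map_smul, hxy, smul_eq_mul, mul_left_comm]

theorem CyclicAntimonotone.isVacuumProjection (h : CyclicAntimonotone φ Φ A F₁) (hqF₁ : q ∈ F₁)
    (hq : IsIdempotentElem q) (hΦq : Φ q = 1) (hφ1 : φ 1 = 1) {F : Submodule ℂ B} (hqF : q ∈ F)
    (hFmulL : ∀ b, ∀ f ∈ F, b * f ∈ F) (hFmulR : ∀ b, ∀ f ∈ F, f * b ∈ F)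
    (hφF : ∀ f ∈ F, φ f = 0) (hφ'A : ∀ a ∈ A, φ' a = 0) (hφ'F : ∀ f ∈ F, φ' f = Φ f) :
    IsVacuumProjection φ φ' A q where
  isIdempotentElem := hq
  map_one := hφ1
  map_mul_mul u v := hφF _ (hFmulR _ _ (hFmulL _ _ hqF))
  map'_eq_zero := hφ'A
  map'_mul_mul c hc d hd := by
    rw [hφ'F _ (hFmulR _ _ (hFmulL _ _ hqF))]
    simpa [mul_assoc, hΦq] using h.apply_list (l := []) hqF₁ hq hc (by simp) hd
  map'_sandwich u hu a ha v hv := by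
    rw [hφ'F _ (hFmulR _ _ (hFmulL _ _ hqF)),
      hφ'F _ (hFmulR _ _ (hFmulL _ _ (hFmulL _ _ hqF)))]
    exact h.apply_sandwich hqF₁ hq ha hu hv

end VacuumProjection

section NullIdeal

variable {φ φ' : B →ₗ[ℂ] ℂ} {A : Subalgebra ℂ B} {q a u v z : B}

lemma le_vacuumAlgebra (A : Subalgebra ℂ B) (q : B) : A ≤ vacuumAlgebra A q :=
  fun _ ha => Algebra.subset_adjoin (Or.inl ha)

lemma self_mem_vacuumAlgebra (A : Subalgebra ℂ B) (q : B) : q ∈ vacuumAlgebra A q :=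
  Algebra.subset_adjoin (Or.inr rfl)

/-- The elements of `vacuumAlgebra A q` that neither `φ` nor `φ'` can detect, whatever they are
multiplied with. -/
def nullIdeal (φ φ' : B →ₗ[ℂ] ℂ) (A : Subalgebra ℂ B) (q : B) : Submodule ℂ B where
  carrier := {z | z ∈ vacuumAlgebra A q ∧ ∀ u ∈ vacuumAlgebra A q, ∀ v ∈ vacuumAlgebra A q,
    φ (u * z * v) = 0 ∧ φ' (u * z * v) = 0}
  zero_mem' := ⟨zero_mem _, by simp⟩
  add_mem' := fun ⟨hx, hx'⟩ ⟨hy, hy'⟩ => ⟨add_mem hx hy, fun u hu v hv => by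
    simp [mul_add, add_mul, hx' u hu v hv, hy' u hu v hv]⟩
  smul_mem' := fun c _ ⟨hx, hx'⟩ => ⟨SMulMemClass.smul_mem c hx, fun u hu v hv => by
    simp [hx' u hu v hv]⟩

lemma mem_vacuumAlgebra_of_mem_nullIdeal (hz : z ∈ nullIdeal φ φ' A q) : z ∈ vacuumAlgebra A q :=
  hz.1

lemma map_mul_mul_of_mem_nullIdeal (hz : z ∈ nullIdeal φ φ' A q) (hu : u ∈ vacuumAlgebra A q)
    (hv : v ∈ vacuumAlgebra A q) : φ (u * z * v) = 0 :=
  (hz.2 u hu v hv).1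

lemma map'_mul_mul_of_mem_nullIdeal (hz : z ∈ nullIdeal φ φ' A q) (hu : u ∈ vacuumAlgebra A q)
    (hv : v ∈ vacuumAlgebra A q) : φ' (u * z * v) = 0 :=
  (hz.2 u hu v hv).2

lemma mul_mem_nullIdeal_left (hu : u ∈ vacuumAlgebra A q) (hz : z ∈ nullIdeal φ φ' A q) :
    u * z ∈ nullIdeal φ φ' A q :=
  ⟨mul_mem hu hz.1, fun x hx y hy => by simpa [mul_assoc] using hz.2 (x * u) (mul_mem hx hu) y hy⟩

lemma mul_mem_nullIdeal_right (hz : z ∈ nullIdeal φ φ' A q) (hv : v ∈ vacuumAlgebra A q) :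
    z * v ∈ nullIdeal φ φ' A q :=
  ⟨mul_mem hz.1 hv, fun x hx y hy => by simpa [mul_assoc] using hz.2 x hx (v * y) (mul_mem hv hy)⟩

lemma IsVacuumProjection.corner_sub_mem_nullIdeal (hq : IsVacuumProjection φ φ' A q) (ha : a ∈ A) :
    q * a * q - φ a • q ∈ nullIdeal φ φ' A q := by
  have hqC := self_mem_vacuumAlgebra A q
  refine ⟨sub_mem (mul_mem (mul_mem hqC (le_vacuumAlgebra A q ha)) hqC)
    (SMulMemClass.smul_mem _ hqC), fun u hu v hv => ⟨?_, ?_⟩⟩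
  · have hqaq : φ (u * (q * a * q) * v) = 0 := by
      simpa [mul_assoc] using hq.map_mul_mul (u * q * a) v
    rw [mul_sub, sub_mul, map_sub, hqaq, mul_smul_comm, smul_mul_assoc, map_smul,
      hq.map_mul_mul, smul_zero, sub_zero]
  · simp only [mul_sub, sub_mul, map_sub, hq.map'_sandwich u hu a ha v hv, mul_smul_comm,
      smul_mul_assoc, map_smul, smul_eq_mul, sub_self]

lemma IsVacuumProjection.corner_mem_nullIdeal (hq : IsVacuumProjection φ φ' A q) (ha : a ∈ A)
    (hφa : φ a = 0) : q * a * q ∈ nullIdeal φ φ' A q := by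
  simpa [hφa] using hq.corner_sub_mem_nullIdeal ha

end NullIdeal

section Core

variable {φ φ' : B →ₗ[ℂ] ℂ} {A M : Subalgebra ℂ B} {q a b x y : B}

/-- The `φ`-centered elements of `M`. -/
def centeredPart (φ : B →ₗ[ℂ] ℂ) (M : Subalgebra ℂ B) : Submodule ℂ B :=
  Subalgebra.toSubmodule M ⊓ LinearMap.ker φ

/-- The span of the products `c * q * d` with `c`, `d` centered elements of `M`. -/
def centeredCorner (φ : B →ₗ[ℂ] ℂ) (q : B) (M : Subalgebra ℂ B) : Submodule ℂ B :=
  centeredPart φ M * (ℂ ∙ q) * centeredPart φ M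

lemma mul_span_singleton_mul_le {P P' N : Submodule ℂ B} :
    P * (ℂ ∙ q) * P' ≤ N ↔ ∀ c ∈ P, ∀ d ∈ P', c * q * d ∈ N := by
  simp only [Submodule.mul_le, Submodule.mem_mul_span_singleton]
  constructor
  · exact fun h c hc d hd => h _ ⟨c, hc, rfl⟩ d hd
  · rintro h _ ⟨c, hc, rfl⟩ d hd
    exact h c hc d hd

lemma centeredCorner_le {N : Submodule ℂ B} :
    centeredCorner φ q M ≤ N ↔
      ∀ c ∈ centeredPart φ M, ∀ d ∈ centeredPart φ M, c * q * d ∈ N :=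
  mul_span_singleton_mul_le

/-- The relation between a centered element `b` of the compression of `M` by `1 - q` and the
centered element `a` of `M` it is compressed from: modulo elements invisible to `φ` and `φ'`, they
differ by `- q * a - a * q` and a combination of products `c * q * d` with centered factors. -/
structure IsCore (φ φ' : B →ₗ[ℂ] ℂ) (A : Subalgebra ℂ B) (q : B) (M : Subalgebra ℂ B)
    (b a : B) : Prop where
  mul_eq_zero : q * b = 0
  mem : a ∈ M
  map_eq_zero : φ a = 0
  exists_corner : ∃ k ∈ centeredCorner φ q M,
    b - (a - q * a - a * q + k) ∈ nullIdeal φ φ' A q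

lemma centeredCorner_le_vacuumAlgebra (hM : M ≤ A) :
    centeredCorner φ q M ≤ Subalgebra.toSubmodule (vacuumAlgebra A q) :=
  centeredCorner_le.2 fun _ hc _ hd => (Subalgebra.mem_toSubmodule _).2 <|
    mul_mem (mul_mem (le_vacuumAlgebra A q (hM hc.1)) (self_mem_vacuumAlgebra A q))
      (le_vacuumAlgebra A q (hM hd.1))

lemma IsCore.mem_vacuumAlgebra (h : IsCore φ φ' A q M b a) (hM : M ≤ A) :
    b ∈ vacuumAlgebra A q := by
  obtain ⟨k, hk, hb⟩ := h.exists_corner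
  have ha := le_vacuumAlgebra A q (hM h.mem)
  have hqC := self_mem_vacuumAlgebra A q
  rw [← sub_add_cancel b (a - q * a - a * q + k)]
  exact add_mem (mem_vacuumAlgebra_of_mem_nullIdeal hb) (add_mem
    (sub_mem (sub_mem ha (mul_mem hqC ha)) (mul_mem ha hqC))
    (centeredCorner_le_vacuumAlgebra hM hk))

lemma IsCore.map_mul_sub_mul (hq : IsVacuumProjection φ φ' A q) (h : IsCore φ φ' A q M b a)
    (hx : x ∈ vacuumAlgebra A q) (hy : y ∈ vacuumAlgebra A q) : φ (x * (b - a) * y) = 0 := by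
  obtain ⟨k, hk, hb⟩ := h.exists_corner
  have hφk : φ (x * k * y) = 0 := by
    have hle : centeredCorner φ q M ≤
        LinearMap.ker (φ ∘ₗ LinearMap.mulRight ℂ y ∘ₗ LinearMap.mulLeft ℂ x) :=
      centeredCorner_le.2 fun c _ d _ => by
        simpa [mul_assoc] using hq.map_mul_mul (x * c) (d * y)
    simpa using hle hk
  have hqa : φ (x * (q * a) * y) = 0 := by
    simpa [mul_assoc] using hq.map_mul_mul x (a * y)
  have haq : φ (x * (a * q) * y) = 0 := by
    simpa [mul_assoc] using hq.map_mul_mul (x * a) y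
  have hnull := map_mul_mul_of_mem_nullIdeal hb hx hy
  have hsplit : x * (b - a) * y = x * (b - (a - q * a - a * q + k)) * y
      - x * (q * a) * y - x * (a * q) * y + x * k * y := by noncomm_ring
  rw [hsplit, map_add, map_sub, map_sub, hnull, hqa, haq, hφk]
  simp

lemma IsCore.map'_eq (hq : IsVacuumProjection φ φ' A q) (h : IsCore φ φ' A q M b a)
    (hM : M ≤ A) {k : B} (hb : b - (a - q * a - a * q + k) ∈ nullIdeal φ φ' A q) :
    φ' b = φ' k := by
  have hnull := map'_mul_mul_of_mem_nullIdeal hb (one_mem _) (one_mem _)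
  have hqa := hq.map'_mul_mul 1 (one_mem A) a (hM h.mem)
  have haq := hq.map'_mul_mul a (hM h.mem) 1 (one_mem A)
  simp only [one_mul, mul_one, map_sub, map_add, h.map_eq_zero, hq.map'_eq_zero a (hM h.mem)]
    at hnull hqa haq
  rw [hqa, haq] at hnull
  linear_combination hnull

lemma IsCore.mul_sub_mem_nullIdeal (hq : IsVacuumProjection φ φ' A q) (h : IsCore φ φ' A q M b a)
    (hM : M ≤ A) (hx : x ∈ A) (hφx : φ x = 0) (hxM : ∀ c ∈ M, φ c = 0 → φ (x * c) = 0) :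
    q * x * (b - a) ∈ nullIdeal φ φ' A q := by
  obtain ⟨k, hk, hb⟩ := h.exists_corner
  have hqC := self_mem_vacuumAlgebra A q
  have hAC := le_vacuumAlgebra A q
  have hqa : q * x * q * a ∈ nullIdeal φ φ' A q :=
    mul_mem_nullIdeal_right (hq.corner_mem_nullIdeal hx hφx) (hAC (hM h.mem))
  have haq : q * (x * a) * q ∈ nullIdeal φ φ' A q :=
    hq.corner_mem_nullIdeal (mul_mem hx (hM h.mem)) (hxM a h.mem h.map_eq_zero)
  have hqxk : q * x * k ∈ nullIdeal φ φ' A q := by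
    have hle : centeredCorner φ q M ≤
        (nullIdeal φ φ' A q).comap (LinearMap.mulLeft ℂ (q * x)) :=
      centeredCorner_le.2 fun c hc d hd => by
        simpa [mul_assoc] using mul_mem_nullIdeal_right
          (hq.corner_mem_nullIdeal (mul_mem hx (hM hc.1)) (hxM c hc.1 hc.2)) (hAC (hM hd.1))
    exact hle hk
  have hsplit : q * x * (b - a) = q * x * (b - (a - q * a - a * q + k))
      - q * x * q * a - q * (x * a) * q + q * x * k := by noncomm_ring
  rw [hsplit]
  exact add_mem (sub_mem (sub_mem (mul_mem_nullIdeal_left (mul_mem hqC (hAC hx)) hb) hqa) haq) hqxk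

end Core

section Compression

variable {φ φ' : B →ₗ[ℂ] ℂ} {A M : Subalgebra ℂ B} {q b : B}

/-- The algebra generated by the compressions `(1 - q) * a * (1 - q)` of the elements of `M`. -/
def compression (M : Subalgebra ℂ B) (q : B) : NonUnitalSubalgebra ℂ B :=
  NonUnitalAlgebra.adjoin ℂ {x | ∃ a ∈ M, x = (1 - q) * a * (1 - q)}

lemma idempotent_mul_eq_zero_of_mem_compression (hq : IsIdempotentElem q)
    (hb : b ∈ compression M q) : q * b = 0 := by
  induction hb using NonUnitalAlgebra.adjoin_induction with
  | mem x hx =>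
    obtain ⟨a, -, rfl⟩ := hx
    rw [← mul_assoc, ← mul_assoc, hq.mul_one_sub_self, zero_mul, zero_mul]
  | add x y _ _ hx hy => rw [mul_add, hx, hy, add_zero]
  | zero => rw [mul_zero]
  | mul x y _ _ hx _ => rw [← mul_assoc, hx, zero_mul]
  | smul r x _ hx => rw [mul_smul_comm, hx, smul_zero]

lemma mul_idempotent_eq_zero_of_mem_compression (hq : IsIdempotentElem q)
    (hb : b ∈ compression M q) : b * q = 0 := by
  induction hb using NonUnitalAlgebra.adjoin_induction with
  | mem x hx =>
    obtain ⟨a, -, rfl⟩ := hx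
    rw [mul_assoc, hq.one_sub_mul_self, mul_zero]
  | add x y _ _ hx hy => rw [add_mul, hx, hy, add_zero]
  | zero => rw [zero_mul]
  | mul x y _ _ _ hy => rw [mul_assoc, hy, mul_zero]
  | smul r x _ hx => rw [smul_mul_assoc, hx, smul_zero]

lemma one_sub_mem_compression (hq : IsIdempotentElem q) : 1 - q ∈ compression M q :=
  NonUnitalAlgebra.subset_adjoin ℂ ⟨1, one_mem M, by rw [mul_one, hq.one_sub.eq]⟩

/-- The sum of `M`, of `M * q * M` and of the elements that `φ` and `φ'` cannot detect, which is
a subalgebra containing the compression of `M`. -/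
def vacuumForm (φ φ' : B →ₗ[ℂ] ℂ) (A : Subalgebra ℂ B) (q : B) (M : Subalgebra ℂ B) :
    Submodule ℂ B :=
  Subalgebra.toSubmodule M ⊔
    Subalgebra.toSubmodule M * (ℂ ∙ q) * Subalgebra.toSubmodule M ⊔ nullIdeal φ φ' A q

lemma toSubmodule_le_vacuumForm :
    Subalgebra.toSubmodule M ≤ vacuumForm φ φ' A q M :=
  le_sup_left.trans le_sup_left

lemma vacuumForm_le (hM : M ≤ A) :
    vacuumForm φ φ' A q M ≤ Subalgebra.toSubmodule (vacuumAlgebra A q) := by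
  set C := vacuumAlgebra A q
  have hMC : Subalgebra.toSubmodule M ≤ Subalgebra.toSubmodule C :=
    hM.trans (le_vacuumAlgebra A q)
  have hqC : (ℂ ∙ q) ≤ Subalgebra.toSubmodule C := by
    simpa using self_mem_vacuumAlgebra A q
  refine sup_le (sup_le hMC ?_) fun z hz => mem_vacuumAlgebra_of_mem_nullIdeal hz
  calc Subalgebra.toSubmodule M * (ℂ ∙ q) * Subalgebra.toSubmodule M
      ≤ Subalgebra.toSubmodule C * Subalgebra.toSubmodule C * Subalgebra.toSubmodule C := by gcongr
    _ = Subalgebra.toSubmodule C := by simp [C.isIdempotentElem_toSubmodule.eq]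

lemma nullIdeal_mul_le {P : Submodule ℂ B} (hP : P ≤ Subalgebra.toSubmodule (vacuumAlgebra A q)) :
    nullIdeal φ φ' A q * P ≤ nullIdeal φ φ' A q :=
  Submodule.mul_le.2 fun _ hz _ hv => mul_mem_nullIdeal_right hz (hP hv)

lemma mul_nullIdeal_le {P : Submodule ℂ B} (hP : P ≤ Subalgebra.toSubmodule (vacuumAlgebra A q)) :
    P * nullIdeal φ φ' A q ≤ nullIdeal φ φ' A q :=
  Submodule.mul_le.2 fun _ hu _ hz => mul_mem_nullIdeal_left (hP hu) hz

lemma IsVacuumProjection.corner_le (hq : IsVacuumProjection φ φ' A q) (hM : M ≤ A) :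
    (ℂ ∙ q) * Subalgebra.toSubmodule M * (ℂ ∙ q) ≤ (ℂ ∙ q) ⊔ nullIdeal φ φ' A q := by
  intro x hx
  obtain ⟨y, hy, rfl⟩ := Submodule.mem_mul_span_singleton.1 hx
  obtain ⟨a, ha, rfl⟩ := Submodule.mem_span_singleton_mul.1 hy
  rw [← add_sub_cancel (φ a • q) (q * a * q)]
  exact Submodule.add_mem_sup (Submodule.smul_mem _ _ (Submodule.mem_span_singleton_self q))
    (hq.corner_sub_mem_nullIdeal (hM ha))

lemma IsVacuumProjection.corner_mul_corner_le (hq : IsVacuumProjection φ φ' A q) (hM : M ≤ A) :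
    Subalgebra.toSubmodule M * (ℂ ∙ q) * Subalgebra.toSubmodule M *
        (Subalgebra.toSubmodule M * (ℂ ∙ q) * Subalgebra.toSubmodule M) ≤
      Subalgebra.toSubmodule M * (ℂ ∙ q) * Subalgebra.toSubmodule M ⊔ nullIdeal φ φ' A q := by
  set N := nullIdeal φ φ' A q
  set S := Subalgebra.toSubmodule M
  have hS : S ≤ Subalgebra.toSubmodule (vacuumAlgebra A q) := hM.trans (le_vacuumAlgebra A q)
  calc S * (ℂ ∙ q) * S * (S * (ℂ ∙ q) * S) = S * ((ℂ ∙ q) * (S * S) * (ℂ ∙ q)) * S := by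
        simp only [mul_assoc]
    _ = S * ((ℂ ∙ q) * S * (ℂ ∙ q)) * S := by rw [M.isIdempotentElem_toSubmodule.eq]
    _ ≤ S * ((ℂ ∙ q) ⊔ N) * S := by gcongr; exact hq.corner_le hM
    _ = S * (ℂ ∙ q) * S ⊔ S * N * S := by rw [Submodule.mul_sup, Submodule.sup_mul]
    _ ≤ S * (ℂ ∙ q) * S ⊔ N := by
        gcongr
        exact (mul_le_mul_left (mul_nullIdeal_le hS) _).trans (nullIdeal_mul_le hS)

lemma IsVacuumProjection.vacuumForm_mul_le (hq : IsVacuumProjection φ φ' A q) (hM : M ≤ A) :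
    vacuumForm φ φ' A q M * vacuumForm φ φ' A q M ≤ vacuumForm φ φ' A q M := by
  set N := nullIdeal φ φ' A q
  set S := Subalgebra.toSubmodule M
  set W := S ⊔ S * (ℂ ∙ q) * S
  have hSS : S * S = S := M.isIdempotentElem_toSubmodule.eq
  have hWW : W * W ≤ W ⊔ N := by
    have hleft : S * (S * (ℂ ∙ q) * S) = S * (ℂ ∙ q) * S := by
      rw [← mul_assoc, ← mul_assoc, hSS]
    have hright : S * (ℂ ∙ q) * S * S = S * (ℂ ∙ q) * S := by rw [mul_assoc, hSS]
    rw [Submodule.sup_mul, Submodule.mul_sup, Submodule.mul_sup, hSS, hleft, hright]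
    exact sup_le le_sup_left (sup_le (le_sup_right.trans le_sup_left)
      ((hq.corner_mul_corner_le hM).trans (sup_le_sup_right le_sup_right _)))
  have hWN : W * N ≤ N :=
    mul_nullIdeal_le (le_sup_left.trans (vacuumForm_le (φ := φ) (φ' := φ') hM))
  calc (W ⊔ N) * (W ⊔ N) = W * W ⊔ W * N ⊔ N * (W ⊔ N) := by
        rw [Submodule.sup_mul, Submodule.mul_sup W]
    _ ≤ W ⊔ N := sup_le (sup_le hWW (hWN.trans le_sup_right))
        ((nullIdeal_mul_le (vacuumForm_le hM)).trans le_sup_right)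

lemma IsVacuumProjection.mem_vacuumForm (hq : IsVacuumProjection φ φ' A q)
    (hM : M ≤ A) (hb : b ∈ compression M q) : b ∈ vacuumForm φ φ' A q M := by
  have hle : compression M q ≤ (vacuumForm φ φ' A q M).toNonUnitalSubalgebra fun x y hx hy =>
      hq.vacuumForm_mul_le hM (Submodule.mul_mem_mul hx hy) := by
    refine NonUnitalAlgebra.adjoin_le ?_
    rintro _ ⟨a, ha, rfl⟩
    have hcorner : ∀ c ∈ M, ∀ d ∈ M, c * q * d ∈ vacuumForm φ φ' A q M := fun c hc d hd =>
      Submodule.mem_sup_left <| Submodule.mem_sup_right <|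
        mul_span_singleton_mul_le.1 le_rfl c hc d hd
    have hexpand : (1 - q) * a * (1 - q) = a - 1 * q * a - a * q * 1 + φ a • (1 * q * 1)
        + (q * a * q - φ a • q) := by
      rw [one_mul, mul_one]
      noncomm_ring
    rw [hexpand]
    refine add_mem (add_mem (sub_mem (sub_mem (toSubmodule_le_vacuumForm ha) ?_) ?_)
      (Submodule.smul_mem _ _ ?_)) (Submodule.mem_sup_right (hq.corner_sub_mem_nullIdeal (hM ha)))
    exacts [hcorner 1 (one_mem M) a ha, hcorner a ha 1 (one_mem M),
      hcorner 1 (one_mem M) 1 (one_mem M)]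
  exact hle hb

lemma sub_map_smul_one_mem_centeredPart (hφ1 : φ 1 = 1) {c : B} (hc : c ∈ M) :
    c - φ c • 1 ∈ centeredPart φ M :=
  ⟨sub_mem hc (SMulMemClass.smul_mem _ (one_mem M)), by simp [hφ1]⟩

lemma IsVacuumProjection.one_sub_mul_mul_one_sub_mem (hq : IsVacuumProjection φ φ' A q)
    (hM : M ≤ A) {r : B}
    (hr : r ∈ Subalgebra.toSubmodule M * (ℂ ∙ q) * Subalgebra.toSubmodule M) :
    (1 - q) * r * (1 - q) ∈ centeredCorner φ q M ⊔ nullIdeal φ φ' A q := by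
  have hqC := self_mem_vacuumAlgebra A q
  have hMC := hM.trans (le_vacuumAlgebra A q)
  have hle : Subalgebra.toSubmodule M * (ℂ ∙ q) * Subalgebra.toSubmodule M ≤
      (centeredCorner φ q M ⊔ nullIdeal φ φ' A q).comap
        (LinearMap.mulRight ℂ (1 - q) ∘ₗ LinearMap.mulLeft ℂ (1 - q)) := by
    refine mul_span_singleton_mul_le.2 fun c hc d hd => ?_
    have hc₀ := sub_map_smul_one_mem_centeredPart hq.map_one hc
    have hd₀ := sub_map_smul_one_mem_centeredPart hq.map_one hd
    have hleft : (1 - q) * (c * q) = (c - φ c • 1) * q - (q * c * q - φ c • q) := by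
      simp only [sub_mul, one_mul, smul_mul_assoc, mul_assoc]
      abel
    have hright : q * d * (1 - q) = q * (d - φ d • 1) - (q * d * q - φ d • q) := by
      simp only [mul_sub, mul_one, mul_smul_comm, mul_assoc]
      abel
    have hexpand : (1 - q) * (c * q * d) * (1 - q) = (c - φ c • 1) * q * (d - φ d • 1)
        + (-((c - φ c • 1) * (q * d * q - φ d • q)) -
          (q * c * q - φ c • q) * (d * (1 - q))) := by
      calc (1 - q) * (c * q * d) * (1 - q) = (1 - q) * (c * q) * (d * (1 - q)) := by
            simp only [mul_assoc]
        _ = (c - φ c • 1) * (q * d * (1 - q)) - (q * c * q - φ c • q) * (d * (1 - q)) := by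
            rw [hleft, sub_mul]
            simp only [mul_assoc]
        _ = _ := by
            rw [hright, mul_sub, ← mul_assoc (c - φ c • 1) q]
            abel
    rw [Submodule.mem_comap, LinearMap.comp_apply, LinearMap.mulLeft_apply,
      LinearMap.mulRight_apply, hexpand]
    refine Submodule.add_mem_sup (centeredCorner_le.1 le_rfl _ hc₀ _ hd₀) (sub_mem (neg_mem ?_) ?_)
    · exact mul_mem_nullIdeal_left (hMC hc₀.1) (hq.corner_sub_mem_nullIdeal (hM hd))
    · exact mul_mem_nullIdeal_right (hq.corner_sub_mem_nullIdeal (hM hc))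
        (mul_mem (hMC hd) (sub_mem (one_mem _) hqC))
  simpa using hle hr

theorem IsVacuumProjection.exists_isCore (hq : IsVacuumProjection φ φ' A q) (hM : M ≤ A)
    (hb : b ∈ compression M q) (hφb : φ b = 0) : ∃ a, IsCore φ φ' A q M b a := by
  have hqb := idempotent_mul_eq_zero_of_mem_compression hq.isIdempotentElem hb
  have hbq := mul_idempotent_eq_zero_of_mem_compression hq.isIdempotentElem hb
  have hp : 1 - q ∈ vacuumAlgebra A q := sub_mem (one_mem _) (self_mem_vacuumAlgebra A q)
  obtain ⟨w, hw, n, hn, hwn⟩ := Submodule.mem_sup.1 (hq.mem_vacuumForm hM hb)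
  obtain ⟨a, ha, r, hr, har⟩ := Submodule.mem_sup.1 hw
  have hφr : φ r = 0 := by
    have hle := mul_span_singleton_mul_le.2 fun c (_ : c ∈ Subalgebra.toSubmodule M) d
      (_ : d ∈ Subalgebra.toSubmodule M) => LinearMap.mem_ker.2 (hq.map_mul_mul c d)
    exact hle hr
  have hφn : φ n = 0 := by simpa using map_mul_mul_of_mem_nullIdeal hn (one_mem _) (one_mem _)
  have hφa : φ a = 0 := by
    rw [← hφb, ← hwn, ← har, map_add, map_add, hφr, hφn, add_zero, add_zero]
  obtain ⟨k, hk, n', hn', hkn⟩ := Submodule.mem_sup.1 (hq.one_sub_mul_mul_one_sub_mem hM hr)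
  refine ⟨a, hqb, ha, hφa, k, hk, ?_⟩
  have hsplit : b - (a - q * a - a * q + k) = q * a * q + n' + (1 - q) * n * (1 - q) := by
    have hpbp : b = (1 - q) * b * (1 - q) := by
      simp [sub_mul, mul_sub, hqb, hbq]
    calc b - (a - q * a - a * q + k)
        = (1 - q) * (a + r + n) * (1 - q) - (a - q * a - a * q + k) := by
          rw [har, hwn, ← hpbp]
      _ = (1 - q) * a * (1 - q) + (k + n') + (1 - q) * n * (1 - q)
          - (a - q * a - a * q + k) := by rw [hkn, mul_add, mul_add, add_mul, add_mul]
      _ = _ := by noncomm_ring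
  rw [hsplit]
  exact add_mem (add_mem (hq.corner_mem_nullIdeal (hM ha) hφa) hn')
    (mul_mem_nullIdeal_right (mul_mem_nullIdeal_left hp hn) hp)

end Compression

section Substitution

variable {ι R : Type*}

/-- The word `w` with each letter `x` replaced by `α x`; its indices are kept. -/
def substWord (α : ι × R → R) (w : List (ι × R)) : List (ι × R) :=
  w.map fun x => (x.1, α x)

@[simp]
lemma substWord_nil (α : ι × R → R) : substWord α [] = [] := rfl

@[simp]
lemma substWord_cons (α : ι × R → R) (x : ι × R) (w : List (ι × R)) :
    substWord α (x :: w) = (x.1, α x) :: substWord α w := rfl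

@[simp]
lemma substWord_append (α : ι × R → R) (v w : List (ι × R)) :
    substWord α (v ++ w) = substWord α v ++ substWord α w :=
  List.map_append

lemma map_fst_substWord (α : ι × R → R) (w : List (ι × R)) :
    (substWord α w).map Prod.fst = w.map Prod.fst := by
  simp [substWord]

lemma wordProd_sub_wordProd_substWord [Ring R] (α : ι × R → R) (w : List (ι × R)) :
    wordProd w - wordProd (substWord α w) = ∑ k : Fin w.length,
      wordProd (substWord α (w.take k)) * (w[k].2 - α w[k]) * wordProd (w.drop (k + 1)) := by
  induction w with
  | nil => simp
  | cons x w ih =>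
    calc wordProd (x :: w) - wordProd (substWord α (x :: w))
        = (x.2 - α x) * wordProd w + α x * (wordProd w - wordProd (substWord α w)) := by
          simp only [wordProd_cons, substWord_cons, sub_mul, mul_sub]
          abel
      _ = _ := by
          rw [ih, Finset.mul_sum]
          simp [Fin.sum_univ_succ, mul_assoc]

end Substitution

section LeibnizCompression

variable {ι : Type*} {φ φ' : B →ₗ[ℂ] ℂ} {A : Subalgebra ℂ B} {Ai : ι → Subalgebra ℂ B}
  {α : ι × B → B} {q a b : B} {i : ι} {U V w X : List (ι × B)}

lemma IsCenteredWord.of_isCore (hchain : (w.map Prod.fst).IsChain (· ≠ ·))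
    (hα : ∀ x ∈ w, IsCore φ φ' A q (Ai x.1) x.2 (α x)) :
    IsCenteredWord φ (fun i => (Ai i : Set B)) (substWord α w) where
  isChain := by rwa [map_fst_substWord]
  mem := by
    rw [substWord, List.forall_mem_map]
    exact fun x hx => (hα x hx).mem
  map_eq_zero := by
    rw [substWord, List.forall_mem_map]
    exact fun x hx => (hα x hx).map_eq_zero

lemma IsCenteredWord.wordProd_mem_of_le (hw : IsCenteredWord φ (fun i => (Ai i : Set B)) w)
    (hAi : ∀ i, Ai i ≤ A) : wordProd w ∈ A :=
  wordProd_mem fun x hx => hAi _ (hw.mem x hx)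

lemma mul_wordProd_sub_mem_nullIdeal (hq : IsVacuumProjection φ φ' A q) (hAi : ∀ i, Ai i ≤ A)
    (hfree : IsFreeFamily φ fun i => (Ai i : Set B))
    (hα : ∀ x ∈ V, IsCore φ φ' A q (Ai x.1) x.2 (α x)) (hX : X ≠ [])
    (hw : IsCenteredWord φ (fun i => (Ai i : Set B)) (X ++ substWord α V)) :
    q * wordProd X * (wordProd V - wordProd (substWord α V)) ∈ nullIdeal φ φ' A q := by
  induction V generalizing X with
  | nil => simp
  | cons x V ih =>
    obtain ⟨hx, hV⟩ := List.forall_mem_cons.1 hα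
    have hXw := hw.of_infix (List.prefix_append _ _).isInfix
    have hfirst : q * wordProd X * (x.2 - α x) ∈ nullIdeal φ φ' A q := by
      refine hx.mul_sub_mem_nullIdeal hq (hAi _) (hXw.wordProd_mem_of_le hAi)
        (hfree.apply_wordProd hXw hX) fun c hc hφc => ?_
      have hXc : IsCenteredWord φ (fun i => (Ai i : Set B)) (X ++ [(x.1, c)]) :=
        (hw.replace hc hφc).of_infix ⟨[], substWord α V, by simp [substWord]⟩
      simpa using hfree.apply_wordProd hXc (by simp)
    have hrest := ih hV (X := X ++ [(x.1, α x)]) (by simp) (by simpa using hw)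
    have hsplit : q * wordProd X * (wordProd (x :: V) - wordProd (substWord α (x :: V))) =
        q * wordProd X * (x.2 - α x) * wordProd V +
          q * wordProd (X ++ [(x.1, α x)]) * (wordProd V - wordProd (substWord α V)) := by
      simp only [wordProd_cons, substWord_cons, wordProd_append, wordProd_nil, mul_one]
      noncomm_ring
    rw [hsplit]
    exact add_mem (mul_mem_nullIdeal_right hfirst
      (wordProd_mem fun y hy => (hV y hy).mem_vacuumAlgebra (hAi _))) hrest

lemma map'_mul_wordProd_eq (hq : IsVacuumProjection φ φ' A q) (hAi : ∀ i, Ai i ≤ A)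
    (hfree : IsFreeFamily φ fun i => (Ai i : Set B)) {x d : B} (hx : x ∈ A)
    (hα : ∀ x ∈ V, IsCore φ φ' A q (Ai x.1) x.2 (α x))
    (hw : IsCenteredWord φ (fun i => (Ai i : Set B)) ((i, d) :: substWord α V)) :
    φ' (x * q * (d * wordProd V)) = φ (x * (d * wordProd (substWord α V))) := by
  have hpush : q * d * (wordProd V - wordProd (substWord α V)) ∈ nullIdeal φ φ' A q := by
    simpa using mul_wordProd_sub_mem_nullIdeal hq hAi hfree hα (X := [(i, d)]) (by simp) hw
  have hnull := map'_mul_mul_of_mem_nullIdeal hpush (le_vacuumAlgebra A q hx) (one_mem _)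
  have hdV : d * wordProd (substWord α V) ∈ A := by simpa using hw.wordProd_mem_of_le hAi
  rw [← hq.map'_mul_mul x hx _ hdV, ← sub_eq_zero, ← map_sub, ← hnull]
  congr 1
  noncomm_ring

lemma IsCore.map'_mul_corner_mul (hq : IsVacuumProjection φ φ' A q) (hAi : ∀ i, Ai i ≤ A)
    (hfree : IsFreeFamily φ fun i => (Ai i : Set B))
    (hα : ∀ x ∈ V, IsCore φ φ' A q (Ai x.1) x.2 (α x))
    (hw : IsCenteredWord φ (fun i => (Ai i : Set B)) (U ++ (i, a) :: substWord α V))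
    {k : B} (hk : k ∈ centeredCorner φ q (Ai i)) :
    φ' (wordProd U * k * wordProd V) =
      φ' k * φ (wordProd U * wordProd (substWord α V)) := by
  have hU := (hw.of_infix (List.prefix_append _ _).isInfix).wordProd_mem_of_le hAi
  have hle : centeredCorner φ q (Ai i) ≤ LinearMap.ker
      (φ' ∘ₗ LinearMap.mulRight ℂ (wordProd V) ∘ₗ LinearMap.mulLeft ℂ (wordProd U) -
        φ (wordProd U * wordProd (substWord α V)) • φ') := by
    refine centeredCorner_le.2 fun c hc d hd => ?_
    have hdV := (hw.replace hd.1 hd.2).of_infix (List.suffix_append _ _).isInfix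
    have hinsert : φ (wordProd U * (c * d) * wordProd (substWord α V)) =
        φ (c * d) * φ (wordProd U * wordProd (substWord α V)) :=
      IsFreeFamily.apply_insert (D := fun i => (Ai i).toNonUnitalSubalgebra) (e := 1) hfree
        hq.map_one (fun i => one_mem (Ai i)) (by simp) hw (mul_mem hc.1 hd.1)
    have hpush := map'_mul_wordProd_eq hq hAi hfree (mul_mem hU (hAi i hc.1)) hα hdV
    simp only [LinearMap.mem_ker, LinearMap.sub_apply, LinearMap.comp_apply, LinearMap.smul_apply,
      LinearMap.mulLeft_apply, LinearMap.mulRight_apply, smul_eq_mul,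
      hq.map'_mul_mul c (hAi i hc.1) d (hAi i hd.1)]
    simp only [mul_assoc] at hinsert hpush ⊢
    rw [hpush, hinsert]
    ring
  have hker := hle hk
  simp only [LinearMap.mem_ker, LinearMap.sub_apply, LinearMap.comp_apply, LinearMap.smul_apply,
    LinearMap.mulLeft_apply, LinearMap.mulRight_apply, smul_eq_mul] at hker
  linear_combination hker

/-- Replacing one compressed letter by its core produces one term of the Leibniz rule. -/
lemma IsCore.map'_mul_sub_mul (hq : IsVacuumProjection φ φ' A q) (hAi : ∀ i, Ai i ≤ A)
    (hfree : IsFreeFamily φ fun i => (Ai i : Set B)) (h : IsCore φ φ' A q (Ai i) b a)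
    (hα : ∀ x ∈ V, IsCore φ φ' A q (Ai x.1) x.2 (α x))
    (hw : IsCenteredWord φ (fun i => (Ai i : Set B)) (U ++ (i, a) :: substWord α V)) :
    φ' (wordProd U * (b - a) * wordProd V) =
      φ' b * φ (wordProd U * wordProd (substWord α V)) := by
  obtain ⟨k, hk, hb⟩ := h.exists_corner
  have hU := (hw.of_infix (List.prefix_append _ _).isInfix).wordProd_mem_of_le hAi
  have hV : wordProd V ∈ vacuumAlgebra A q :=
    wordProd_mem fun y hy => (hα y hy).mem_vacuumAlgebra (hAi _)
  have hnull := map'_mul_mul_of_mem_nullIdeal hb (le_vacuumAlgebra A q hU) hV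
  have hqa : φ' (wordProd U * q * (a * wordProd V)) = 0 := by
    rw [map'_mul_wordProd_eq hq hAi hfree hU hα
      (hw.of_infix (List.suffix_append _ _).isInfix)]
    simpa using hfree.apply_wordProd hw (by simp)
  have haq : φ' (wordProd U * a * (q * wordProd V)) = 0 := by
    rcases V with _ | ⟨x, V⟩
    · have hUa := hq.map'_mul_mul _ (mul_mem hU (hAi i h.mem)) 1 (one_mem A)
      simpa [mul_assoc] using hUa.trans (by simpa using hfree.apply_wordProd hw (by simp))
    · rw [wordProd_cons, ← mul_assoc q, (hα x (by simp)).mul_eq_zero]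
      simp
  have hsplit : wordProd U * (b - a) * wordProd V =
      wordProd U * (b - (a - q * a - a * q + k)) * wordProd V - wordProd U * q * (a * wordProd V)
        - wordProd U * a * (q * wordProd V) + wordProd U * k * wordProd V := by noncomm_ring
  rw [hsplit, map_add, map_sub, map_sub, hnull, hqa, haq,
    IsCore.map'_mul_corner_mul hq hAi hfree hα hw hk, h.map'_eq hq (hAi i) hb]
  simp

lemma map_wordProd_substWord (hq : IsVacuumProjection φ φ' A q) (hAi : ∀ i, Ai i ≤ A)
    (hα : ∀ x ∈ w, IsCore φ φ' A q (Ai x.1) x.2 (α x)) :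
    φ (wordProd (substWord α w)) = φ (wordProd w) := by
  refine (sub_eq_zero.1 ?_).symm
  rw [← map_sub, wordProd_sub_wordProd_substWord, map_sum]
  refine Finset.sum_eq_zero fun k _ => ?_
  refine (hα _ (List.getElem_mem k.2)).map_mul_sub_mul hq (wordProd_mem ?_) (wordProd_mem ?_)
  · rw [substWord, List.forall_mem_map]
    exact fun x hx => le_vacuumAlgebra A q (hAi _ (hα x (List.mem_of_mem_take hx)).mem)
  · exact fun x hx => (hα x (List.mem_of_mem_drop hx)).mem_vacuumAlgebra (hAi _)

lemma IsVacuumProjection.exists_isCore_of_isCenteredWord (hq : IsVacuumProjection φ φ' A q)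
    (hAi : ∀ i, Ai i ≤ A)
    (hw : IsCenteredWord φ (fun i => (compression (Ai i) q : Set B)) w) :
    ∃ α : ι × B → B, ∀ x ∈ w, IsCore φ φ' A q (Ai x.1) x.2 (α x) := by
  have hcore : ∀ x ∈ w, ∃ a, IsCore φ φ' A q (Ai x.1) x.2 a := fun x hx =>
    hq.exists_isCore (hAi x.1) (hw.mem x hx) (hw.map_eq_zero x hx)
  choose! α hα using hcore
  exact ⟨α, hα⟩

theorem IsVacuumProjection.isFreeFamily_compression (hq : IsVacuumProjection φ φ' A q)
    (hAi : ∀ i, Ai i ≤ A) (hfree : IsFreeFamily φ fun i => (Ai i : Set B)) :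
    IsFreeFamily φ fun i => (compression (Ai i) q : Set B) := by
  intro n idx b hidx hmem hzero
  have hw := isCenteredWord_ofFn (D := fun i => (compression (Ai i) q : Set B)) hidx hmem hzero
  obtain ⟨α, hα⟩ := hq.exists_isCore_of_isCenteredWord hAi hw
  rw [← wordProd_ofFn idx, ← map_wordProd_substWord hq hAi hα]
  exact hfree.apply_wordProd (.of_isCore hw.isChain hα) (by simp [substWord])

theorem IsVacuumProjection.leibnizRule_compression (hq : IsVacuumProjection φ φ' A q)
    (hAi : ∀ i, Ai i ≤ A) (hfree : IsFreeFamily φ fun i => (Ai i : Set B)) :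
    LeibnizRule φ φ' fun i => (compression (Ai i) q : Set B) := by
  intro w hw
  obtain ⟨α, hα⟩ := hq.exists_isCore_of_isCenteredWord hAi hw
  have hcores := IsCenteredWord.of_isCore hw.isChain hα
  rw [← sub_add_cancel (wordProd w) (wordProd (substWord α w)), map_add,
    hq.map'_eq_zero _ (hcores.wordProd_mem_of_le hAi), add_zero,
    wordProd_sub_wordProd_substWord, map_sum]
  refine Finset.sum_congr rfl fun k _ => ?_
  have htake : ∀ x ∈ w.take k, IsCore φ φ' A q (Ai x.1) x.2 (α x) :=
    fun x hx => hα x (List.mem_of_mem_take hx)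
  have hdrop : ∀ x ∈ w.drop (k + 1), IsCore φ φ' A q (Ai x.1) x.2 (α x) :=
    fun x hx => hα x (List.mem_of_mem_drop hx)
  have hsubst : substWord α (w.take k) ++ (w[k].1, α w[k]) :: substWord α (w.drop (k + 1)) =
      substWord α w := by
    rw [← substWord_cons, ← substWord_append]
    congr 1
    simp
  have hrest : φ (wordProd (substWord α (w.take k)) * wordProd (substWord α (w.drop (k + 1)))) =
      φ (wordProd (w.take k) * wordProd (w.drop (k + 1))) := by
    rw [← wordProd_append, ← wordProd_append, ← substWord_append]
    exact map_wordProd_substWord hq hAi fun x hx =>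
      (List.mem_append.1 hx).elim (htake x) (hdrop x)
  rw [← hrest]
  exact (hα _ (List.getElem_mem k.2)).map'_mul_sub_mul hq hAi hfree hdrop (hsubst ▸ hcores)

theorem IsVacuumProjection.isInfFree_compression (hq : IsVacuumProjection φ φ' A q)
    (hAi : ∀ i, Ai i ≤ A) (hfree : IsFreeFamily φ fun i => (Ai i : Set B)) :
    IsInfFree φ φ' fun i => (compression (Ai i) q : Set B) := by
  refine (hq.leibnizRule_compression hAi hfree).isInfFree
    (hq.isFreeFamily_compression hAi hfree) hq.map_one
    (fun i => one_sub_mem_compression hq.isIdempotentElem) fun x y => ?_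
  rw [mul_sub, sub_mul, map_sub, hq.map_mul_mul, mul_one, sub_zero]

end LeibnizCompression

lemma IsInfFree.add_left {ι R : Type*} [Ring R] {φ φ' : R → ℂ} {D : ι → Set R}
    (h : IsInfFree φ φ' D) : IsInfFree φ (fun b => φ b + φ' b) D := by
  obtain ⟨hfree, hother, hpal⟩ := h
  refine ⟨hfree, fun n idx b hidx hmem hzero hne => ?_, fun m idx b hidx hmem hzero heq => ?_⟩
  · simp only [hfree n idx b hidx hmem hzero, hother n idx b hidx hmem hzero hne, add_zero]
  · simp only [hfree _ idx b hidx hmem hzero, hzero, hpal m idx b hidx hmem hzero heq, zero_add]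

theorem statement12_general {A : Subalgebra ℂ B} {F : Submodule ℂ B}
    (hFmulL : ∀ b : B, ∀ f ∈ F, b * f ∈ F)
    (hFmulR : ∀ b : B, ∀ f ∈ F, f * b ∈ F)
    {φ Φ φ' : B →ₗ[ℂ] ℂ}
    (hφ1 : φ 1 = 1) (hφF : ∀ f ∈ F, φ f = 0)
    (hφ'A : ∀ a ∈ A, φ' a = 0) (hφ'F : ∀ f ∈ F, φ' f = Φ f)
    {q : B} (hqF : q ∈ F) (hq2 : q * q = q) (hΦq : Φ q = 1)
    (hcamq : CyclicAntimonotone ⇑φ ⇑Φ (A : Set B) {x | ∃ c : ℂ, x = c • q})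
    {ι : Type*}
    {Ai : ι → Subalgebra ℂ B} (hAi : ∀ i, Ai i ≤ A)
    (hfree : IsFreeFamily ⇑φ (fun i => (Ai i : Set B))) :
    IsInfFree ⇑φ (fun b => φ b + φ' b) (fun i => (compression (Ai i) q : Set B)) := by
  have hq : IsVacuumProjection φ φ' A q := hcamq.isVacuumProjection ⟨1, (one_smul ℂ q).symm⟩ hq2
    hΦq hφ1 hqF hFmulL hFmulR hφF hφ'A hφ'F
  exact (hq.isInfFree_compression hAi hfree).add_left

theorem statement12
    {B : Type*} [Ring B] [Algebra ℂ B]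
    (A : Subalgebra ℂ B) (F : Submodule ℂ B)
    (hFmulL : ∀ b : B, ∀ f ∈ F, b * f ∈ F)
    (hFmulR : ∀ b : B, ∀ f ∈ F, f * b ∈ F)
    (hAF : ∀ x ∈ A, x ∈ F → x = 0)
    (hdec : ∀ x : B, ∃ a ∈ A, ∃ f ∈ F, x = a + f)
    (φ Φ φ' : B →ₗ[ℂ] ℂ)
    (hφ1 : φ 1 = 1) (hφF : ∀ f ∈ F, φ f = 0)
    (hφ'A : ∀ a ∈ A, φ' a = 0) (hφ'F : ∀ f ∈ F, φ' f = Φ f)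
    (q : B) (hqF : q ∈ F) (hq2 : q * q = q) (hΦq : Φ q = 1)
    (hcamq : CyclicAntimonotone ⇑φ ⇑Φ (A : Set B) {x | ∃ c : ℂ, x = c • q})
    {ι : Type*}
    (Ai : ι → Subalgebra ℂ B) (hAi : ∀ i, Ai i ≤ A)
    (hfree : IsFreeFamily ⇑φ (fun i => (Ai i : Set B))) :
    IsInfFree ⇑φ (fun b => φ b + φ' b)
      (fun i => (NonUnitalAlgebra.adjoin ℂ
        {x | ∃ a ∈ Ai i, x = (1 - q) * a * (1 - q)} : Set B)) :=
  statement12_general hFmulL hFmulR hφ1 hφF hφ'A hφ'F hqF hq2 hΦq hcamq hAi hfree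

end TypeBPrime
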